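/- arXiv:1102.4353 — 2 statements merged into one kernel-verified Lean document; each statement's English description precedes it below -/
import Mathlib

section
/- Let G be a finite group and γ ≥ 1. The number of tuples (t_1,...,t_{2γ}) ∈ G^{2γ} with [t_1,t_2][t_3,t_4]⋯[t_{2γ−1},t_{2γ}] = 1 equals |G|^{2γ−1} · ∑_{ρ ∈ Irr(G)} (dim ρ)^{2−2γ}. -/
open CategoryTheory

lemma aux_schur {G : Type} [Group G] [Fintype G] (V : FDRep ℂ G) [Simple V] (T : V →ₗ[ℂ] V)
    (h : ∀ g, T ∘ₗ V.ρ g = V.ρ g ∘ₗ T) : ∃ c : ℂ, T = c • (1 : V →ₗ[ℂ] V) := by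
  let f : V ⟶ V := FDRep.forget₂HomLinearEquiv V V (Rep.ofHom ⟨T, fun g => h g⟩)
  have h1 := finrank_endomorphism_simple_eq_one ℂ V
  obtain ⟨c, hc⟩ := (finrank_eq_one_iff_of_nonzero' (𝟙 V) (id_nonzero V)).mp h1 f
  refine ⟨c, ?_⟩
  have := congrArg (fun q : V ⟶ V => q.hom.hom.hom) hc
  exact this.symm

lemma aux_dim {G : Type} [Group G] [Fintype G] (V : FDRep ℂ G) [hV : Simple V] :
    (Module.finrank ℂ V : ℂ) ≠ 0 := by
  intro h
  have h0 : Module.finrank ℂ V = 0 := by exact_mod_cast h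
  have := Module.finrank_zero_iff.mp h0
  have h2 := (FDRep.simple_iff_char_is_norm_one V).mp hV
  have : ∀ g, V.character g = 0 := fun g => by
    have : V.ρ g = 0 := by ext x; exact Subsingleton.elim _ _
    rw [FDRep.character, this, map_zero]
  simp [this] at h2
  exact Fintype.card_ne_zero (α := G) (by exact_mod_cast h2.symm)

lemma aux_schur_trace {G : Type} [Group G] [Fintype G] (V : FDRep ℂ G) [Simple V] (T : V →ₗ[ℂ] V)
    (h : ∀ g, T ∘ₗ V.ρ g = V.ρ g ∘ₗ T) :
    T = (LinearMap.trace ℂ V T / Module.finrank ℂ V) • (1 : V →ₗ[ℂ] V) := by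
  obtain ⟨c, rfl⟩ := aux_schur V T h
  have := aux_dim V
  rw [map_smul, LinearMap.trace_one, smul_eq_mul, mul_div_cancel_right₀ _ this]

/-- a class function acts by a central operator -/
lemma aux_class {G : Type} [Group G] [Fintype G] (V : FDRep ℂ G) [Simple V] (f : G → ℂ)
    (hf : ∀ g h, f (h * g * h⁻¹) = f g) :
    ∑ g, f g • V.ρ g⁻¹ =
      ((∑ g, f g * V.character g⁻¹) / Module.finrank ℂ V) • (1 : V →ₗ[ℂ] V) := by
  have := aux_schur_trace V (∑ g, f g • V.ρ g⁻¹) ?_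
  · rw [this]; simp [FDRep.character]
  · intro h
    change (∑ g, f g • V.ρ g⁻¹) * V.ρ h = V.ρ h * (∑ g, f g • V.ρ g⁻¹)
    rw [Finset.sum_mul, Finset.mul_sum]
    rw [← Equiv.sum_comp (MulAut.conj h).toEquiv]
    refine Finset.sum_congr rfl fun g _ => ?_
    simp only [MulEquiv.toEquiv_eq_coe, MulEquiv.coe_toEquiv, MulAut.conj_apply, hf,
      smul_mul_assoc, mul_smul_comm, ← map_mul]
    congr 2
    group

lemma aux_comm {G : Type} [Group G] [Fintype G] (V : FDRep ℂ G) [hV : Simple V] :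
    ∑ p : G × G, V.ρ (p.1 * p.2 * p.1⁻¹ * p.2⁻¹) =
      (((Fintype.card G : ℂ) / Module.finrank ℂ V) ^ 2) • (1 : V →ₗ[ℂ] V) := by
  have h1 : ∀ b, ∑ a, V.ρ (a * b * a⁻¹) =
      ((Fintype.card G : ℂ) * V.character b / Module.finrank ℂ V) • (1 : V →ₗ[ℂ] V) := by
    intro b
    have := aux_schur_trace V (∑ a, V.ρ (a * b * a⁻¹)) ?_
    · rw [this, map_sum]
      congr 2
      change ∑ a, V.character (a * b * a⁻¹) = _
      simp
    · intro h
      change (∑ a, V.ρ (a * b * a⁻¹)) * V.ρ h = V.ρ h * (∑ a, V.ρ (a * b * a⁻¹))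
      rw [Finset.sum_mul, Finset.mul_sum, ← Equiv.sum_comp (Equiv.mulLeft h)]
      refine Finset.sum_congr rfl fun g _ => ?_
      simp only [Equiv.coe_mulLeft, ← map_mul]
      congr 1
      group
  have h2 := aux_class V V.character (fun g h => V.char_conj g h)
  rw [(FDRep.simple_iff_char_is_norm_one V).mp hV] at h2
  rw [Fintype.sum_prod_type_right]
  have : ∀ b, ∑ a, V.ρ (a * b * a⁻¹ * b⁻¹) =
      ((Fintype.card G : ℂ) / Module.finrank ℂ V) • (V.character b • V.ρ b⁻¹) := by
    intro b
    simp only [map_mul V.ρ (_ * _ * _) b⁻¹]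
    rw [← Finset.sum_mul, h1, smul_mul_assoc, one_mul, smul_smul]
    congr 1
    ring
  simp only [this]
  rw [← Finset.smul_sum, h2, smul_smul, pow_two, Nat.card_eq_fintype_card]

lemma aux_irr {G : Type} [Group G] [Fintype G] (f : G → ℂ)
    (hf : ∀ V : FDRep ℂ G, Simple V → ∑ g, f g • V.ρ g⁻¹ = 0)
    (M : Type) [AddCommGroup M] [Module ℂ M] [Module.Finite ℂ M] (σ : Representation ℂ G M)
    (hirr : σ.IsIrreducible) : ∑ g, f g • σ g⁻¹ = 0 := by
  let V : FDRep ℂ G := FDRep.of σ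
  have hV : Simple V := by
    have := invertibleOfNonzero (NeZero.ne (Nat.card G : ℂ))
    rw [FDRep.simple_iff_char_is_norm_one]
    have h := Representation.char_orthonormal σ σ
    rw [if_pos ⟨Representation.Equiv.refl σ⟩, inv_mul_eq_one₀ (NeZero.ne _)] at h
    exact h.symm
  exact hf V hV

lemma aux_module {G : Type} [Group G] [Fintype G] (f : G → ℂ)
    (hf : ∀ V : FDRep ℂ G, Simple V → ∑ g, f g • V.ρ g⁻¹ = 0)
    (M : Type) [AddCommGroup M] [Module (MonoidAlgebra ℂ G) M]
    [hs : IsSimpleModule (MonoidAlgebra ℂ G) M] [Module.Finite (MonoidAlgebra ℂ G) M] (x : M) :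
    (∑ g, MonoidAlgebra.single g⁻¹ (f g) : MonoidAlgebra ℂ G) • x = 0 := by
  have hirr := (Representation.isSimpleModule_iff_irreducible_ofModule (k := ℂ) (G := G) M).mp hs
  have : Module.Finite ℂ (RestrictScalars ℂ (MonoidAlgebra ℂ G) M) := by
    let : Module (MonoidAlgebra ℂ G) (RestrictScalars ℂ (MonoidAlgebra ℂ G) M) :=
      RestrictScalars.moduleOrig _ _ _
    have : Module.Finite (MonoidAlgebra ℂ G) (RestrictScalars ℂ (MonoidAlgebra ℂ G) M) :=
      inferInstanceAs (Module.Finite (MonoidAlgebra ℂ G) M)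
    have : IsScalarTower ℂ (MonoidAlgebra ℂ G) (RestrictScalars ℂ (MonoidAlgebra ℂ G) M) :=
      RestrictScalars.isScalarTower _ _ _
    exact Module.Finite.trans (MonoidAlgebra ℂ G) _
  let σ := Representation.ofModule (k := ℂ) (G := G) M
  let modC : Module ℂ (RestrictScalars ℂ (MonoidAlgebra ℂ G) M) := inferInstance
  have h0 : ∑ g, f g • σ g⁻¹ = 0 :=
    @aux_irr G _ _ f hf (RestrictScalars ℂ (MonoidAlgebra ℂ G) M) _
      modC this σ hirr
  have h1 : σ.asAlgebraHom (∑ g, MonoidAlgebra.single g⁻¹ (f g)) = 0 := by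
    simp only [map_sum, Representation.asAlgebraHom_single]
    exact h0
  have h2 := Representation.ofModule_asAlgebraHom_apply_apply (k := ℂ) (G := G) (M := M)
    (∑ g, MonoidAlgebra.single g⁻¹ (f g))
    ((RestrictScalars.addEquiv ℂ (MonoidAlgebra ℂ G) M).symm x)
  change σ.asAlgebraHom _ _ = _ at h2
  rw [h1] at h2
  simpa using h2.symm

lemma aux_zero {G : Type} [Group G] [Fintype G] (f : G → ℂ)
    (hf : ∀ V : FDRep ℂ G, Simple V → ∑ g, f g • V.ρ g⁻¹ = 0) (g : G) : f g = 0 := by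
  classical
  let z : MonoidAlgebra ℂ G := ∑ g, MonoidAlgebra.single g⁻¹ (f g)
  have hz : z ∈ Ring.jacobson (MonoidAlgebra ℂ G) := by
    rw [Ring.jacobson, Module.jacobson, Submodule.mem_sInf]
    intro m hm
    have hs : IsSimpleModule (MonoidAlgebra ℂ G) (MonoidAlgebra ℂ G ⧸ m) :=
      isSimpleModule_iff_isCoatom.mpr hm
    have h3 := aux_module f hf (MonoidAlgebra ℂ G ⧸ m) (Submodule.Quotient.mk 1)
    rw [← Submodule.Quotient.mk_smul, Submodule.Quotient.mk_eq_zero] at h3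
    simpa using h3
  rw [IsSemisimpleRing.jacobson_eq_bot, Submodule.mem_bot] at hz
  have := congrArg (fun w : MonoidAlgebra ℂ G => w.coeff g⁻¹) hz
  simpa [z, MonoidAlgebra.coeff_sum, Finsupp.single_apply] using this

lemma aux_delta (G : Type) [Group G] [Fintype G] [DecidableEq G]
    (ι : Type*) [Fintype ι] (W : ι → FDRep ℂ G)
    (hsimple : ∀ i, Simple (W i))
    (hdist : ∀ i j, Nonempty (W i ≅ W j) → i = j)
    (hall : ∀ V : FDRep ℂ G, Simple V → ∃ i, Nonempty (V ≅ W i)) (g : G) :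
    (if g = 1 then (Fintype.card G : ℂ) else 0) =
      ∑ i, (Module.finrank ℂ (W i) : ℂ) * (W i).character g := by
  classical
  rw [← sub_eq_zero]
  refine aux_zero (fun g : G => (if g = 1 then (Fintype.card G : ℂ) else 0) -
      ∑ i, (Module.finrank ℂ (W i) : ℂ) * (W i).character g) ?_ g
  intro V hV
  rw [aux_class]
  · obtain ⟨j, ⟨e⟩⟩ := hall V hV
    have := invertibleOfNonzero (NeZero.ne (Nat.card G : ℂ))
    have key : ∀ i, ∑ g, (W i).character g * (W j).character g⁻¹ =
        if i = j then (Fintype.card G : ℂ) else 0 := by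
      intro i
      have h := FDRep.char_orthonormal (W i) (W j)
      have hiff : Nonempty (W i ≅ W j) ↔ i = j :=
        ⟨hdist i j, by rintro rfl; exact ⟨Iso.refl _⟩⟩
      rw [inv_mul_eq_iff_eq_mul₀ (NeZero.ne _)] at h
      rw [h]
      simp [hiff]
    have : ∑ g, ((if g = 1 then (Fintype.card G : ℂ) else 0) -
      ∑ i, (Module.finrank ℂ (W i) : ℂ) * (W i).character g) * V.character g⁻¹ = 0 := by
      rw [FDRep.char_iso e]
      simp only [sub_mul, Finset.sum_sub_distrib, Finset.sum_mul]
      rw [Finset.sum_comm]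
      simp only [mul_assoc, ← Finset.mul_sum, key]
      simp [mul_comm]
    rw [this, zero_div, zero_smul]
  · intro g h
    simp

lemma aux_prod {G : Type} [Group G] [Fintype G] {A : Type*} [Ring A] (r : G →* A)
    (c : G × G → G) (γ : ℕ) :
    ∑ t : Fin γ → G × G, r (List.ofFn (fun j => c (t j))).prod = (∑ p, r (c p)) ^ γ := by
  induction γ with
  | zero => simp
  | succ n ih =>
    rw [← Equiv.sum_comp (Fin.consEquiv (fun _ : Fin (n+1) => G × G)), Fintype.sum_prod_type,
      pow_succ', Finset.sum_mul]
    refine Finset.sum_congr rfl fun p _ => ?_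
    rw [← ih, Finset.mul_sum]
    refine Finset.sum_congr rfl fun t _ => ?_
    simp [List.ofFn_succ, Fin.consEquiv]

theorem card_product_commutators_eq_one
    (G : Type) [Group G] [Fintype G]
    (ι : Type*) [Fintype ι] (W : ι → FDRep ℂ G)
    (hsimple : ∀ i, CategoryTheory.Simple (W i))
    (hdist : ∀ i j, Nonempty (W i ≅ W j) → i = j)
    (hall : ∀ V : FDRep ℂ G, CategoryTheory.Simple V → ∃ i, Nonempty (V ≅ W i))
    (γ : ℕ) (hγ : 1 ≤ γ) :
    (Nat.card {t : Fin γ → G × G //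
        (List.ofFn (fun j => (t j).1 * (t j).2 * ((t j).1)⁻¹ * ((t j).2)⁻¹)).prod = 1} : ℚ) =
      (Fintype.card G : ℚ) ^ (2 * γ - 1) *
        ∑ i, (Module.finrank ℂ (W i) : ℚ) ^ ((2 : ℤ) - 2 * γ) := by
  classical
  have hG : (Fintype.card G : ℂ) ≠ 0 := Nat.cast_ne_zero.mpr Fintype.card_ne_zero
  have key : (Nat.card {t : Fin γ → G × G //
        (List.ofFn (fun j => (t j).1 * (t j).2 * ((t j).1)⁻¹ * ((t j).2)⁻¹)).prod = 1} : ℂ) *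
      Fintype.card G =
      ∑ i, (Module.finrank ℂ (W i) : ℂ) ^ 2 *
        (((Fintype.card G : ℂ) / Module.finrank ℂ (W i)) ^ 2) ^ γ := by
    rw [Nat.card_eq_fintype_card, Fintype.card_subtype, Finset.card_filter, Nat.cast_sum,
      Finset.sum_mul]
    have h1 : ∀ t : Fin γ → G × G, (((if (List.ofFn (fun j =>
        (t j).1 * (t j).2 * ((t j).1)⁻¹ * ((t j).2)⁻¹)).prod = 1 then 1 else 0 : ℕ) : ℂ) *
        Fintype.card G) = ∑ i, (Module.finrank ℂ (W i) : ℂ) * (W i).character (List.ofFn (fun j =>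
        (t j).1 * (t j).2 * ((t j).1)⁻¹ * ((t j).2)⁻¹)).prod := by
      intro t
      rw [← aux_delta G ι W hsimple hdist hall]
      split_ifs <;> simp
    simp only [h1]
    rw [Finset.sum_comm]
    refine Finset.sum_congr rfl fun i _ => ?_
    have := hsimple i
    rw [← Finset.mul_sum]
    simp only [FDRep.character]
    rw [← map_sum, aux_prod (W i).ρ (fun p => p.1 * p.2 * p.1⁻¹ * p.2⁻¹) γ, aux_comm, smul_pow,
      one_pow, map_smul, LinearMap.trace_one, smul_eq_mul]
    ring
  have goalC : (Nat.card {t : Fin γ → G × G //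
        (List.ofFn (fun j => (t j).1 * (t j).2 * ((t j).1)⁻¹ * ((t j).2)⁻¹)).prod = 1} : ℂ) =
      (Fintype.card G : ℂ) ^ (2 * γ - 1) *
        ∑ i, (Module.finrank ℂ (W i) : ℂ) ^ ((2 : ℤ) - 2 * γ) := by
    apply mul_right_cancel₀ hG
    rw [key, mul_right_comm, ← pow_succ, Finset.mul_sum]
    refine Finset.sum_congr rfl fun i _ => ?_
    have := hsimple i
    have hd := aux_dim (W i)
    rw [show 2 * γ - 1 + 1 = 2 * γ by omega, zpow_sub₀ hd, ← pow_mul, div_pow]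
    rw [show (2 : ℤ) * γ = ((2 * γ : ℕ) : ℤ) by push_cast; ring, zpow_natCast]
    rw [show (2 : ℤ) = ((2 : ℕ) : ℤ) by rfl, zpow_natCast]
    ring
  apply Rat.cast_injective (α := ℂ)
  push_cast
  exact goalC
end

section
/- Let G be a finite group. The number of pairs (a,b) ∈ G² with aba⁻¹b⁻¹ = g equals |G| ∑_{ρ ∈ Irr(G)} χ_ρ(g)/dim ρ, for any g ∈ G. -/
open Module in
theorem fcc_schur {G V : Type*} [Group G] [AddCommGroup V] [Module ℂ V] [FiniteDimensional ℂ V]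
    (ρ : Representation ℂ G V) (h : finrank ℂ (Representation.IntertwiningMap ρ ρ) = 1)
    (T : V →ₗ[ℂ] V) (hT : ∀ g, T ∘ₗ ρ g = ρ g ∘ₗ T) :
    T = (LinearMap.trace ℂ V T / (finrank ℂ V : ℂ)) • (1 : V →ₗ[ℂ] V) ∧ (finrank ℂ V : ℂ) ≠ 0 := by
  have hnt : Nontrivial (Representation.IntertwiningMap ρ ρ) :=
    nontrivial_of_finrank_pos (R := ℂ) (by omega)
  have hV : Nontrivial V := by
    by_contra hV
    rw [not_nontrivial_iff_subsingleton] at hV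
    obtain ⟨a, b, hab⟩ := hnt
    exact hab (by ext x; exact Subsingleton.elim _ _)
  have hd : (finrank ℂ V : ℂ) ≠ 0 := by
    exact_mod_cast (finrank_pos (R := ℂ) (M := V)).ne'
  refine ⟨?_, hd⟩
  have h1 : (Representation.IntertwiningMap.id ρ) ≠ 0 := by
    intro h0
    obtain ⟨x, hx⟩ := exists_ne (0 : V)
    exact hx (by simpa using congrArg (fun f : Representation.IntertwiningMap ρ ρ => f x) h0)
  obtain ⟨c, hc⟩ := (finrank_eq_one_iff_of_nonzero' _ h1).mp h ⟨T, hT⟩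
  have hT' : T = c • (1 : V →ₗ[ℂ] V) := by
    ext x
    simpa using (congrArg (fun f : Representation.IntertwiningMap ρ ρ => f x) hc).symm
  have ht : LinearMap.trace ℂ V T = c * finrank ℂ V := by
    rw [hT']; simp
  rw [ht, mul_div_assoc, div_self hd, mul_one]
  exact hT'

open Module in
theorem fcc_class {G V : Type*} [Group G] [Fintype G] [AddCommGroup V] [Module ℂ V]
    [FiniteDimensional ℂ V]
    (ρ : Representation ℂ G V) (h : finrank ℂ (Representation.IntertwiningMap ρ ρ) = 1)
    (f : G → ℂ) (hf : ∀ g x, f (g * x * g⁻¹) = f x) :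
    ∑ x, f x • ρ x = ((∑ x, f x * ρ.character x) / (finrank ℂ V : ℂ)) • (1 : V →ₗ[ℂ] V) := by
  have := (fcc_schur ρ h (∑ x, f x • ρ x) ?_).1
  · rw [this]; simp [Representation.character]
  · intro g
    change (∑ x, f x • ρ x) * ρ g = ρ g * (∑ x, f x • ρ x)
    rw [Finset.sum_mul, Finset.mul_sum]
    refine (Fintype.sum_equiv (MulAut.conj g).toEquiv _ _ fun x => ?_).symm
    simp [hf, ← map_mul]

open Module in
theorem fcc_conj {G V : Type*} [Group G] [Fintype G] [AddCommGroup V] [Module ℂ V]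
    [FiniteDimensional ℂ V]
    (ρ : Representation ℂ G V) (h : finrank ℂ (Representation.IntertwiningMap ρ ρ) = 1) (a : G) :
    ∑ b, ρ (b * a * b⁻¹) =
      (Fintype.card G * ρ.character a / (finrank ℂ V : ℂ)) • (1 : V →ₗ[ℂ] V) := by
  have := (fcc_schur ρ h (∑ b, ρ (b * a * b⁻¹)) ?_).1
  · rw [this]
    have h2 : ∀ b, LinearMap.trace ℂ V (ρ (b * a * b⁻¹)) = ρ.character a :=
      fun b => ρ.char_conj a b
    rw [map_sum, Finset.sum_congr rfl fun b _ => h2 b]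
    simp
  · intro g
    change (∑ b, ρ (b * a * b⁻¹)) * ρ g = ρ g * (∑ b, ρ (b * a * b⁻¹))
    rw [Finset.sum_mul, Finset.mul_sum]
    refine (Fintype.sum_equiv (Equiv.mulLeft g) _ _ fun x => ?_).symm
    simp [← map_mul, mul_assoc]

open Module in
theorem fcc_comm {G V : Type*} [Group G] [Fintype G] [AddCommGroup V] [Module ℂ V]
    [FiniteDimensional ℂ V]
    (ρ : Representation ℂ G V) (h : finrank ℂ (Representation.IntertwiningMap ρ ρ) = 1)
    (hn : ∑ x, ρ.character x * ρ.character x⁻¹ = Fintype.card G) (g : G) :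
    (finrank ℂ V : ℂ) * ∑ a, ∑ b, ρ.character (g * (b * a * b⁻¹ * a⁻¹)) =
      (Fintype.card G : ℂ) ^ 2 * (ρ.character g / (finrank ℂ V : ℂ)) := by
  have hd := (fcc_schur ρ h 0 (by simp)).2
  have h1 : ∀ a, ∑ b, ρ.character (g * (b * a * b⁻¹ * a⁻¹)) =
      (Fintype.card G / (finrank ℂ V : ℂ)) * (ρ.character a * ρ.character (g * a⁻¹)) := by
    intro a
    have : ∀ b, ρ (g * (b * a * b⁻¹ * a⁻¹)) = ρ g * ρ (b * a * b⁻¹) * ρ a⁻¹ := by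
      intro b; simp only [← map_mul, mul_assoc]
    simp only [Representation.character, this]
    rw [← map_sum, ← Finset.sum_mul, ← Finset.mul_sum, fcc_conj ρ h a]
    simp [Representation.character]
    ring
  have h2 : ∑ a, ρ.character a * ρ.character (g * a⁻¹) =
      Fintype.card G / (finrank ℂ V : ℂ) * ρ.character g := by
    have h3 := fcc_class ρ h (fun x => ρ.character x⁻¹) (by
      intro g x
      rw [← ρ.char_conj x⁻¹ g]; simp [mul_assoc])
    rw [← Equiv.sum_comp (Equiv.inv G)] at h3
    simp only [Equiv.inv_apply, inv_inv] at h3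
    rw [Finset.sum_congr rfl fun x _ => mul_comm (ρ.character x⁻¹) _, hn] at h3
    have h4 := congrArg (fun T => LinearMap.trace ℂ V (ρ g * T)) h3
    simp only [Finset.mul_sum, map_sum, mul_smul_comm, map_smul, ← map_mul, mul_one] at h4
    simpa [Representation.character] using h4
  simp only [h1]
  rw [← Finset.mul_sum, h2]
  field_simp

open Module CategoryTheory in
theorem fcc_regular
    (G : Type) [Group G] [Fintype G] [DecidableEq G]
    (ι : Type*) [Fintype ι] (W : ι → FDRep ℂ G)
    (hsimple : ∀ i, CategoryTheory.Simple (W i))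
    (hdist : ∀ i j, Nonempty (W i ≅ W j) → i = j)
    (hall : ∀ V : FDRep ℂ G, CategoryTheory.Simple V → ∃ i, Nonempty (V ≅ W i))
    (g : G) :
    ∑ i, (finrank ℂ (W i) : ℂ) * (W i).character g = if g = 1 then (Fintype.card G : ℂ) else 0 := by
  classical
  have hinv := invertibleOfNonzero (NeZero.ne (Nat.card G : ℂ))
  let f : G → ℂ := fun h => (if h = 1 then (Fintype.card G : ℂ) else 0) -
    ∑ i, (finrank ℂ (W i) : ℂ) * (W i).character h⁻¹
  have hf : ∀ g x, f (g * x * g⁻¹) = f x := by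
    intro g x
    have : ∀ i, (W i).character (g * x * g⁻¹)⁻¹ = (W i).character x⁻¹ := by
      intro i
      rw [← (W i).char_conj x⁻¹ g]; simp [mul_assoc]
    simp only [f, this, conj_eq_one_iff]
  let e : MonoidAlgebra ℂ G := ∑ x, MonoidAlgebra.single x (f x)
  have key : ∀ (M : Type) [AddCommGroup M] [Module (MonoidAlgebra ℂ G) M] [Module ℂ M]
      [IsScalarTower ℂ (MonoidAlgebra ℂ G) M]
      [IsSimpleModule (MonoidAlgebra ℂ G) M] (y : M), e • y = 0 := by
    intro M _ _ _ _ hs y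
    let ρ : Representation ℂ G M := Representation.ofModule' M
    have hρ : ∀ (r : MonoidAlgebra ℂ G) (x : M), ρ.asAlgebraHom r x = r • x := by
      intro r x
      have : ρ.asAlgebraHom = Algebra.lsmul ℂ ℂ M := by
        simp [ρ, Representation.asAlgebraHom, Representation.ofModule']
      rw [this]; rfl
    have hirr : ρ.IsIrreducible := by
      rw [Representation.irreducible_iff_isSimpleModule_asModule]
      let E : ρ.asModule ≃ₗ[MonoidAlgebra ℂ G] M :=
        { ρ.asModuleEquiv.toAddEquiv with
          map_smul' := fun r x => (ρ.asModuleEquiv_map_smul r x).trans (hρ r _) }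
      exact IsSimpleModule.congr E
    have hfin : FiniteDimensional ℂ M := Module.Finite.trans (MonoidAlgebra ℂ G) _
    have hF : finrank ℂ (Representation.IntertwiningMap ρ ρ) = 1 :=
      Representation.IsIrreducible.finrank_intertwiningMap_self ρ
    have hVs : Simple (FDRep.of ρ) := by
      rw [FDRep.simple_iff_char_is_norm_one]
      have := Representation.card_inv_mul_sum_char_mul_char_eq_finrank ρ ρ
      rw [hF, inv_mul_eq_iff_eq_mul₀ (NeZero.ne _)] at this
      rw [Nat.cast_one, mul_one] at this
      exact this
    obtain ⟨j, ⟨φ⟩⟩ := hall _ hVs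
    have hch : ρ.character = (W j).character := FDRep.char_iso φ
    have hdim : finrank ℂ M = finrank ℂ (W j) :=
      (FDRep.isoToLinearEquiv φ).finrank_eq
    have h0 : ∑ x, f x * ρ.character x = 0 := by
      have ho : ∀ i, ∑ x, (W j).character x * (W i).character x⁻¹ =
          if j = i then (Nat.card G : ℂ) else 0 := by
        intro i
        have := FDRep.char_orthonormal (W j) (W i)
        rw [inv_mul_eq_iff_eq_mul₀ (NeZero.ne _)] at this
        rw [this]
        by_cases hji : j = i
        · subst hji
          simp [show Nonempty (W j ≅ W j) from ⟨Iso.refl _⟩]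
        · have : ¬ Nonempty (W j ≅ W i) := fun h => hji (hdist _ _ h)
          simp [hji, this]
      simp only [f, hch, sub_mul, Finset.sum_sub_distrib, Finset.sum_mul]
      rw [Finset.sum_comm]
      have : ∀ i, ∑ x, (finrank ℂ (W i) : ℂ) * (W i).character x⁻¹ * (W j).character x =
          (finrank ℂ (W i) : ℂ) * if j = i then (Nat.card G : ℂ) else 0 := by
        intro i
        rw [← ho, Finset.mul_sum]
        exact Finset.sum_congr rfl fun x _ => by ring
      simp only [this]
      simp [mul_comm]
    have hz := fcc_class ρ hF f hf
    rw [h0, zero_div, zero_smul] at hz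
    have hA : ρ.asAlgebraHom e = 0 := by
      simp only [e, map_sum, Representation.asAlgebraHom_single]
      exact hz
    rw [← hρ, hA]; rfl
  have he : e = 0 := by
    have hj : e ∈ Ring.jacobson (MonoidAlgebra ℂ G) := by
      rw [Ring.jacobson, Module.jacobson, Submodule.mem_sInf]
      intro m hm
      have hs : IsSimpleModule (MonoidAlgebra ℂ G) (MonoidAlgebra ℂ G ⧸ m) :=
        isSimpleModule_iff_isCoatom.mpr hm
      have h6 := key (MonoidAlgebra ℂ G ⧸ m) (Submodule.Quotient.mk 1)
      rw [← Submodule.Quotient.mk_smul, Submodule.Quotient.mk_eq_zero] at h6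
      simpa using h6
    rw [IsSemisimpleRing.jacobson_eq_bot] at hj
    simpa using hj
  have hc : f g⁻¹ = 0 := by
    have := congrArg (fun z : MonoidAlgebra ℂ G => z.coeff g⁻¹) he
    simpa [e, MonoidAlgebra.coeff_sum, Finsupp.single_apply] using this
  simp only [f, inv_inv, inv_eq_one] at hc
  exact (sub_eq_zero.mp hc).symm

theorem frobenius_commutator_count
    (G : Type) [Group G] [Fintype G]
    (ι : Type*) [Fintype ι] (W : ι → FDRep ℂ G)
    (hsimple : ∀ i, CategoryTheory.Simple (W i))
    (hdist : ∀ i j, Nonempty (W i ≅ W j) → i = j)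
    (hall : ∀ V : FDRep ℂ G, CategoryTheory.Simple V → ∃ i, Nonempty (V ≅ W i))
    (g : G) :
    (Nat.card {p : G × G // p.1 * p.2 * p.1⁻¹ * p.2⁻¹ = g} : ℂ) =
      (Fintype.card G : ℂ) *
        ∑ i, (W i).character g / (Module.finrank ℂ (W i) : ℂ) := by
  classical
  have hinv := invertibleOfNonzero (NeZero.ne (Nat.card G : ℂ))
  have hG : (Fintype.card G : ℂ) ≠ 0 := NeZero.ne _
  have hreg := fcc_regular G ι W hsimple hdist hall
  have hcomm : ∀ i, (Module.finrank ℂ (W i) : ℂ) *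
      ∑ a, ∑ b, (W i).character (g * (b * a * b⁻¹ * a⁻¹)) =
      (Fintype.card G : ℂ) ^ 2 * ((W i).character g / (Module.finrank ℂ (W i) : ℂ)) := by
    intro i
    have hn := ((W i).simple_iff_char_is_norm_one).mp (hsimple i)
    have hF := Representation.card_inv_mul_sum_char_mul_char_eq_finrank
      (G := G) (k := ℂ) (W i).ρ (W i).ρ
    have hn' : ∑ x, Representation.character (W i).ρ x * Representation.character (W i).ρ x⁻¹ =
      (Nat.card G : ℂ) := hn
    rw [hn', inv_mul_cancel₀ (NeZero.ne _)] at hF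
    exact fcc_comm (W i).ρ (by exact_mod_cast hF.symm) (by simpa using hn') g
  have hN : (Nat.card {p : G × G // p.1 * p.2 * p.1⁻¹ * p.2⁻¹ = g} : ℂ) =
      ∑ a : G, ∑ b : G, if g * (b * a * b⁻¹ * a⁻¹) = 1 then (1 : ℂ) else 0 := by
    rw [← Fintype.sum_prod_type' (f := fun a b : G =>
      if g * (b * a * b⁻¹ * a⁻¹) = 1 then (1 : ℂ) else 0)]
    rw [Nat.card_eq_fintype_card, Fintype.card_subtype, Finset.sum_boole]
    congr 3
    ext p
    rw [mul_eq_one_iff_eq_inv]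
    simp only [mul_inv_rev, inv_inv, mul_assoc]
    exact eq_comm
  apply mul_left_cancel₀ hG
  rw [hN]
  calc _ = ∑ a : G, ∑ b : G, ∑ i, (Module.finrank ℂ (W i) : ℂ) *
          (W i).character (g * (b * a * b⁻¹ * a⁻¹)) := by
        simp only [hreg, Finset.mul_sum]
        simp
    _ = ∑ i, (Module.finrank ℂ (W i) : ℂ) *
      ∑ a, ∑ b, (W i).character (g * (b * a * b⁻¹ * a⁻¹)) := by
        simp only [Finset.mul_sum]
        rw [Finset.sum_comm]
        rw [Finset.sum_congr rfl fun a _ => Finset.sum_comm]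
        rw [Finset.sum_comm]
        exact Finset.sum_congr rfl fun a _ => Finset.sum_comm
    _ = _ := by
        simp only [hcomm, Finset.mul_sum]
        exact Finset.sum_congr rfl fun i _ => by ring
end
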